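/- arXiv:0707.2135 — 2 statements merged into one kernel-verified Lean document; each statement's English description precedes it below -/
import Mathlib

section
/- For every pair of constants 0 < c_1 ≤ c_2 there is a constant C, depending only on c_1 and c_2, with the following property: for every axis-parallel rectangle R ⊂ ℝ² whose two side lengths lie in [c_1, c_2], with vertices Q_1, Q_2, Q_3, Q_4, and for arbitrary real numbers a_l, b_l, c_l (l = 1,…,4), there exists a polynomial r(x,y) of degree at most four such that r(Q_l) = a_l, r_x(Q_l) = b_l and r_y(Q_l) = c_l for l = 1,…,4, and ‖r‖²_{H²(R)} ≤ C Σ_{l=1}^4 ( |a_l|² + |b_l|² + |c_l|² ). -/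
noncomputable section
open MeasureTheory Real

/-- Evaluation of a bivariate polynomial at `(x, y)`. -/
def pev (r : MvPolynomial (Fin 2) ℝ) (x y : ℝ) : ℝ := MvPolynomial.eval ![x, y] r

/-- The squared `H²` norm of a bivariate polynomial on the axis-parallel rectangle
`[x0, x0+s1] × [y0, y0+s2]` : the sum of the squared `L²` norms of the polynomial and of
all its partial derivatives of order one and two. -/
def polyH2sq (x0 y0 s1 s2 : ℝ) (r : MvPolynomial (Fin 2) ℝ) : ℝ :=
  ∫ x in x0..x0+s1, ∫ y in y0..y0+s2,
    ((pev r x y)^2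
      + (pev (MvPolynomial.pderiv (0 : Fin 2) r) x y)^2
      + (pev (MvPolynomial.pderiv (1 : Fin 2) r) x y)^2
      + (pev (MvPolynomial.pderiv (0 : Fin 2) (MvPolynomial.pderiv (0 : Fin 2) r)) x y)^2
      + (pev (MvPolynomial.pderiv (0 : Fin 2) (MvPolynomial.pderiv (1 : Fin 2) r)) x y)^2
      + (pev (MvPolynomial.pderiv (1 : Fin 2) (MvPolynomial.pderiv (1 : Fin 2) r)) x y)^2)

/-- The `x`-coordinates of the four vertices `Q_1, …, Q_4` of the rectangle. -/
def Qx (x0 s1 : ℝ) : Fin 4 → ℝ := ![x0, x0+s1, x0+s1, x0]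
/-- The `y`-coordinates of the four vertices `Q_1, …, Q_4` of the rectangle. -/
def Qy (y0 s2 : ℝ) : Fin 4 → ℝ := ![y0, y0, y0+s2, y0+s2]

/-!
The interpolant is that of the Adini finite element. On the unit square the value and the two first
derivatives at the four vertices are unisolvent for the span of the cubics together with `x³y` and
`xy³`, and the dual basis is explicit: at the vertex `(0, 0)` it consists of
`(1 - u)(1 - v)(1 + u + v - 2u² - 2v²)`, `u(1 - u)²(1 - v)` and `v(1 - v)²(1 - u)`, and the other
vertices are obtained by reflection (`refInterp_vertex`).

Since the interpolant is linear in the data, Cauchy–Schwarz and compactness of the unit square bound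
the squares of the interpolant and of its derivatives up to order two by a constant times the sum of
the squared data (`exists_refInterp_bound`). A general rectangle is mapped affinely onto the unit
square. The first-derivative data are then multiplied by the side lengths, and each derivative of the
pullback is divided by one; both factors, like the area, are controlled by `c1` and `c2`
(`polyH2sq_pull_le`).
-/

/-! ### Affine pullback from the unit square -/

open MvPolynomial in
/-- The pullback `p ((x - x0) / s1, (y - y0) / s2)` of a polynomial `p` on the unit square to the
rectangle `[x0, x0 + s1] × [y0, y0 + s2]`. -/
def pull (x0 y0 s1 s2 : ℝ) (p : MvPolynomial (Fin 2) ℝ) : MvPolynomial (Fin 2) ℝ :=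
  aeval ![C s1⁻¹ * (X 0 - C x0), C s2⁻¹ * (X 1 - C y0)] p

lemma pev_pull (x0 y0 s1 s2 : ℝ) (p : MvPolynomial (Fin 2) ℝ) (x y : ℝ) :
    pev (pull x0 y0 s1 s2 p) x y = pev p (s1⁻¹ * (x - x0)) (s2⁻¹ * (y - y0)) := by
  unfold pev pull
  induction p using MvPolynomial.induction_on with
  | C a => simp
  | add p q hp hq => simp only [map_add, hp, hq]
  | mul_X p i hp =>
    simp only [map_mul, hp]
    congr 1
    fin_cases i <;> simp

lemma pderiv_zero_pull (x0 y0 s1 s2 : ℝ) (p : MvPolynomial (Fin 2) ℝ) :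
    MvPolynomial.pderiv 0 (pull x0 y0 s1 s2 p)
      = MvPolynomial.C s1⁻¹ * pull x0 y0 s1 s2 (MvPolynomial.pderiv 0 p) := by
  unfold pull
  induction p using MvPolynomial.induction_on with
  | C a => simp
  | add p q hp hq => simp only [map_add, hp, hq, mul_add]
  | mul_X p i hp =>
    simp only [map_mul, Derivation.leibniz, hp, smul_eq_mul, map_add]
    fin_cases i <;> simp [MvPolynomial.pderiv_X] <;> ring

lemma pderiv_one_pull (x0 y0 s1 s2 : ℝ) (p : MvPolynomial (Fin 2) ℝ) :
    MvPolynomial.pderiv 1 (pull x0 y0 s1 s2 p)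
      = MvPolynomial.C s2⁻¹ * pull x0 y0 s1 s2 (MvPolynomial.pderiv 1 p) := by
  unfold pull
  induction p using MvPolynomial.induction_on with
  | C a => simp
  | add p q hp hq => simp only [map_add, hp, hq, mul_add]
  | mul_X p i hp =>
    simp only [map_mul, Derivation.leibniz, hp, smul_eq_mul, map_add]
    fin_cases i <;> simp [MvPolynomial.pderiv_X] <;> ring

lemma totalDegree_pull_le (x0 y0 s1 s2 : ℝ) (p : MvPolynomial (Fin 2) ℝ) :
    (pull x0 y0 s1 s2 p).totalDegree ≤ p.totalDegree := by
  have hX : ∀ (s t : ℝ) (i : Fin 2),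
      (MvPolynomial.C s * (MvPolynomial.X i - MvPolynomial.C t) :
        MvPolynomial (Fin 2) ℝ).totalDegree ≤ 1 := fun s t i => by
    refine (MvPolynomial.totalDegree_mul _ _).trans ?_
    rw [MvPolynomial.totalDegree_C, zero_add]
    refine (MvPolynomial.totalDegree_sub_C_le _ _).trans ?_
    rw [MvPolynomial.totalDegree_X]
  rw [pull, MvPolynomial.aeval_def, MvPolynomial.eval₂_eq']
  refine MvPolynomial.totalDegree_finsetSum_le fun d hd => ?_
  refine (MvPolynomial.totalDegree_mul _ _).trans ?_
  rw [MvPolynomial.algebraMap_eq, MvPolynomial.totalDegree_C, zero_add]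
  refine (MvPolynomial.totalDegree_finsetProd _ _).trans ?_
  refine le_trans ?_ (MvPolynomial.le_totalDegree hd)
  rw [Finsupp.sum_fintype _ _ fun _ => rfl]
  refine Finset.sum_le_sum fun i _ => (MvPolynomial.totalDegree_pow _ _).trans ?_
  refine (Nat.mul_le_mul_left _ ?_).trans (mul_one _).le
  fin_cases i
  · exact hX _ _ _
  · exact hX _ _ _

/-! ### The Adini basis on the unit square -/

open MvPolynomial in
/-- The three Adini shape functions attached to the vertex `(ξ, η) ∈ {0, 1}²` of the unit square,
dual to the value, the `x`-derivative and the `y`-derivative there. The affine functions `u` and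
`v` are `x` and `y` reflected so that `(ξ, η)` becomes the origin; the factors `1 - 2ξ` and
`1 - 2η` are the signs `±1` which these reflections introduce in the first derivatives. -/
def adini (ξ η : ℝ) : Fin 3 → MvPolynomial (Fin 2) ℝ :=
  let u : MvPolynomial (Fin 2) ℝ := C ξ + C (1 - 2 * ξ) * X 0
  let v : MvPolynomial (Fin 2) ℝ := C η + C (1 - 2 * η) * X 1
  ![(1 - u) * (1 - v) * (1 + u + v - 2 * u ^ 2 - 2 * v ^ 2),
    C (1 - 2 * ξ) * (u * (1 - u) ^ 2 * (1 - v)),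
    C (1 - 2 * η) * (v * (1 - v) ^ 2 * (1 - u))]

/-- The Adini basis on the unit square: `(l, k)` is the `k`-th shape function of the `l`-th vertex. -/
def refBasis (j : Fin 4 × Fin 3) : MvPolynomial (Fin 2) ℝ :=
  adini (Qx 0 1 j.1) (Qy 0 1 j.1) j.2

/-- The interpolant on the unit square with data `c (l, 0)` (value), `c (l, 1)` and `c (l, 2)`
(first derivatives) at the `l`-th vertex. -/
def refInterp (c : Fin 4 × Fin 3 → ℝ) : MvPolynomial (Fin 2) ℝ :=
  ∑ j, c j • refBasis j

lemma pev_adini (ξ η x y : ℝ) (k : Fin 3) :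
    pev (adini ξ η k) x y =
      (let s := 1 - 2 * ξ
       let t := 1 - 2 * η
       let u := ξ + s * x
       let v := η + t * y
       ![(1 - u) * (1 - v) * (1 + u + v - 2 * u ^ 2 - 2 * v ^ 2),
         s * (u * (1 - u) ^ 2 * (1 - v)), t * (v * (1 - v) ^ 2 * (1 - u))] k) := by
  fin_cases k <;> simp [pev, adini]

lemma pev_pderiv_zero_adini (ξ η x y : ℝ) (k : Fin 3) :
    pev (MvPolynomial.pderiv 0 (adini ξ η k)) x y =
      (let s := 1 - 2 * ξ
       let t := 1 - 2 * η
       let u := ξ + s * x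
       let v := η + t * y
       ![s * (1 - v) * ((1 - u) * (1 - 4 * u) - (1 + u + v - 2 * u ^ 2 - 2 * v ^ 2)),
         s ^ 2 * (1 - v) * ((1 - u) ^ 2 - 2 * u * (1 - u)),
         -(s * t * v * (1 - v) ^ 2)] k) := by
  have h2 : MvPolynomial.pderiv (0 : Fin 2) (2 : MvPolynomial (Fin 2) ℝ) = 0 :=
    MvPolynomial.pderiv_C (a := (2 : ℝ))
  fin_cases k <;>
    simp [pev, adini, Derivation.leibniz, Derivation.leibniz_pow, MvPolynomial.pderiv_X, h2] <;>
    ring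

lemma pev_pderiv_one_adini (ξ η x y : ℝ) (k : Fin 3) :
    pev (MvPolynomial.pderiv 1 (adini ξ η k)) x y =
      (let s := 1 - 2 * ξ
       let t := 1 - 2 * η
       let u := ξ + s * x
       let v := η + t * y
       ![t * (1 - u) * ((1 - v) * (1 - 4 * v) - (1 + u + v - 2 * u ^ 2 - 2 * v ^ 2)),
         -(s * t * u * (1 - u) ^ 2),
         t ^ 2 * (1 - u) * ((1 - v) ^ 2 - 2 * v * (1 - v))] k) := by
  have h2 : MvPolynomial.pderiv (1 : Fin 2) (2 : MvPolynomial (Fin 2) ℝ) = 0 :=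
    MvPolynomial.pderiv_C (a := (2 : ℝ))
  fin_cases k <;>
    simp [pev, adini, Derivation.leibniz, Derivation.leibniz_pow, MvPolynomial.pderiv_X, h2] <;>
    ring

lemma refInterp_vertex (c : Fin 4 × Fin 3 → ℝ) (l : Fin 4) :
    pev (refInterp c) (Qx 0 1 l) (Qy 0 1 l) = c (l, 0) ∧
    pev (MvPolynomial.pderiv 0 (refInterp c)) (Qx 0 1 l) (Qy 0 1 l) = c (l, 1) ∧
    pev (MvPolynomial.pderiv 1 (refInterp c)) (Qx 0 1 l) (Qy 0 1 l) = c (l, 2) := by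
  have hsum : ∀ (D : MvPolynomial (Fin 2) ℝ →ₗ[ℝ] MvPolynomial (Fin 2) ℝ) (x y : ℝ),
      pev (D (refInterp c)) x y = ∑ j, c j * pev (D (refBasis j)) x y := fun D x y => by
    simp [pev, refInterp, MvPolynomial.smul_eval]
  have h0 := hsum LinearMap.id
  have h1 := hsum (MvPolynomial.pderiv (R := ℝ) 0).toLinearMap
  have h2 := hsum (MvPolynomial.pderiv (R := ℝ) 1).toLinearMap
  simp only [LinearMap.id_apply, Derivation.coeFn_coe, refBasis,
    pev_adini, pev_pderiv_zero_adini, pev_pderiv_one_adini, Fintype.sum_prod_type,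
    Fin.sum_univ_four, Fin.sum_univ_three] at h0 h1 h2
  rw [h0, h1, h2]
  fin_cases l <;> simp [Qx, Qy] <;> norm_num

lemma totalDegree_refInterp_le (c : Fin 4 × Fin 3 → ℝ) : (refInterp c).totalDegree ≤ 4 := by
  refine MvPolynomial.totalDegree_finsetSum_le fun j _ => ?_
  refine (MvPolynomial.totalDegree_smul_le _ _).trans ?_
  have hlin : ∀ (s t : ℝ) (i : Fin 2), (MvPolynomial.C s + MvPolynomial.C t * MvPolynomial.X i :
      MvPolynomial (Fin 2) ℝ).totalDegree ≤ 1 := fun s t i => by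
    refine (MvPolynomial.totalDegree_add _ _).trans (max_le (by simp) ?_)
    refine (MvPolynomial.totalDegree_mul _ _).trans ?_
    simp
  unfold refBasis adini
  set u : MvPolynomial (Fin 2) ℝ := _ + MvPolynomial.C (1 - 2 * Qx 0 1 j.1) * _ with hu
  set v : MvPolynomial (Fin 2) ℝ := _ + MvPolynomial.C (1 - 2 * Qy 0 1 j.1) * _ with hv
  have hdu : u.totalDegree ≤ 1 := hlin _ _ _
  have hdv : v.totalDegree ≤ 1 := hlin _ _ _
  clear_value u v
  have one_sub : ∀ w : MvPolynomial (Fin 2) ℝ, w.totalDegree ≤ 1 → (1 - w).totalDegree ≤ 1 :=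
    fun w hw => (MvPolynomial.totalDegree_sub _ _).trans (max_le (by simp) hw)
  have two_sq : ∀ w : MvPolynomial (Fin 2) ℝ, w.totalDegree ≤ 1 →
      (2 * w ^ 2).totalDegree ≤ 2 := fun w hw => by
    have h2 : (2 : MvPolynomial (Fin 2) ℝ) = MvPolynomial.C 2 := rfl
    refine (MvPolynomial.totalDegree_mul _ _).trans ?_
    have := MvPolynomial.totalDegree_pow w 2
    rw [h2, MvPolynomial.totalDegree_C]
    lia
  have bump : ∀ (s : ℝ) (w z : MvPolynomial (Fin 2) ℝ), w.totalDegree ≤ 1 → z.totalDegree ≤ 1 →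
      (MvPolynomial.C s * (w * (1 - w) ^ 2 * (1 - z))).totalDegree ≤ 4 := fun s w z hw hz => by
    have h1 := MvPolynomial.totalDegree_mul (MvPolynomial.C s) (w * (1 - w) ^ 2 * (1 - z))
    have h2 := MvPolynomial.totalDegree_mul (w * (1 - w) ^ 2) (1 - z)
    have h3 := MvPolynomial.totalDegree_mul w ((1 - w) ^ 2)
    have h4 := MvPolynomial.totalDegree_pow (1 - w) 2
    have h5 := one_sub w hw
    have h6 := one_sub z hz
    rw [MvPolynomial.totalDegree_C] at h1
    lia
  have value : ((1 - u) * (1 - v) * (1 + u + v - 2 * u ^ 2 - 2 * v ^ 2)).totalDegree ≤ 4 := by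
    have h1 := MvPolynomial.totalDegree_mul ((1 - u) * (1 - v))
      (1 + u + v - 2 * u ^ 2 - 2 * v ^ 2)
    have h2 := MvPolynomial.totalDegree_mul (1 - u) (1 - v)
    have h3 := one_sub u hdu
    have h4 := one_sub v hdv
    have h5 : (1 + u + v - 2 * u ^ 2 - 2 * v ^ 2).totalDegree ≤ 2 := by
      refine (MvPolynomial.totalDegree_sub _ _).trans (max_le ?_ (two_sq v hdv))
      refine (MvPolynomial.totalDegree_sub _ _).trans (max_le ?_ (two_sq u hdu))
      refine (MvPolynomial.totalDegree_add _ _).trans (max_le ?_ (by lia))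
      exact (MvPolynomial.totalDegree_add _ _).trans (max_le (by simp) (by lia))
    lia
  obtain ⟨l, k⟩ := j
  fin_cases k
  · exact value
  · exact bump _ u v hdu hdv
  · exact bump _ v u hdv hdu

/-! ### Bounds on the unit square -/

/-- On the unit square the square of `D (∑ j, c j • q j)` is bounded by a multiple of `∑ j, c j ^ 2`:
by Cauchy–Schwarz one may take for the constant the maximum of `∑ j, (D (q j)) ^ 2`. -/
lemma exists_sq_bound {ι : Type*} [Fintype ι] (q : ι → MvPolynomial (Fin 2) ℝ)
    (D : MvPolynomial (Fin 2) ℝ →ₗ[ℝ] MvPolynomial (Fin 2) ℝ) :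
    ∃ K : ℝ, 0 ≤ K ∧ ∀ c : ι → ℝ, ∀ u ∈ Set.Icc (0 : ℝ) 1, ∀ v ∈ Set.Icc (0 : ℝ) 1,
      (pev (D (∑ j, c j • q j)) u v) ^ 2 ≤ K * ∑ j, c j ^ 2 := by
  have hcont : Continuous fun z : ℝ × ℝ => ∑ j, pev (D (q j)) z.1 z.2 ^ 2 := by
    refine continuous_finsetSum _ fun j _ => Continuous.pow ?_ 2
    refine (MvPolynomial.continuous_eval (D (q j))).comp ?_
    refine continuous_pi fun i => ?_
    fin_cases i
    · exact continuous_fst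
    · exact continuous_snd
  obtain ⟨K, hK⟩ := ((isCompact_Icc (a := (0 : ℝ)) (b := 1)).prod
    (isCompact_Icc (a := (0 : ℝ)) (b := 1))).bddAbove_image hcont.continuousOn
  have hK' : ∀ u ∈ Set.Icc (0 : ℝ) 1, ∀ v ∈ Set.Icc (0 : ℝ) 1,
      ∑ j, pev (D (q j)) u v ^ 2 ≤ K := fun u hu v hv =>
    hK ⟨(u, v), ⟨hu, hv⟩, rfl⟩
  refine ⟨K, le_trans (Finset.sum_nonneg fun j _ => sq_nonneg _)
    (hK' 0 (by simp) 0 (by simp)), fun c u hu v hv => ?_⟩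
  have h1 : pev (D (∑ j, c j • q j)) u v = ∑ j, c j * pev (D (q j)) u v := by
    simp [pev, MvPolynomial.smul_eval]
  rw [h1, mul_comm K]
  exact (Finset.sum_mul_sq_le_sq_mul_sq _ _ _).trans
    (mul_le_mul_of_nonneg_left (hK' u hu v hv) (Finset.sum_nonneg fun j _ => sq_nonneg _))

/-- One constant controls the interpolant on the unit square and its derivatives of order at most two. -/
lemma exists_refInterp_bound : ∃ K : ℝ, 0 ≤ K ∧ ∀ c : Fin 4 × Fin 3 → ℝ,
    ∀ u ∈ Set.Icc (0 : ℝ) 1, ∀ v ∈ Set.Icc (0 : ℝ) 1,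
      (pev (refInterp c) u v) ^ 2 ≤ K * ∑ j, c j ^ 2 ∧
      (∀ i, (pev (MvPolynomial.pderiv i (refInterp c)) u v) ^ 2 ≤ K * ∑ j, c j ^ 2) ∧
      ∀ i k, (pev (MvPolynomial.pderiv i (MvPolynomial.pderiv k (refInterp c))) u v) ^ 2
        ≤ K * ∑ j, c j ^ 2 := by
  obtain ⟨K₀, h₀, H₀⟩ := exists_sq_bound refBasis LinearMap.id
  choose K₁ h₁ H₁ using fun i : Fin 2 =>
    exists_sq_bound refBasis (MvPolynomial.pderiv (R := ℝ) i).toLinearMap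
  choose K₂ h₂ H₂ using fun i k : Fin 2 => exists_sq_bound refBasis
    ((MvPolynomial.pderiv (R := ℝ) i).toLinearMap ∘ₗ (MvPolynomial.pderiv (R := ℝ) k).toLinearMap)
  have n₁ : 0 ≤ ∑ i, K₁ i := Finset.sum_nonneg fun i _ => h₁ i
  have n₂ : 0 ≤ ∑ i, ∑ k, K₂ i k :=
    Finset.sum_nonneg fun i _ => Finset.sum_nonneg fun k _ => h₂ i k
  refine ⟨K₀ + ∑ i, K₁ i + ∑ i, ∑ k, K₂ i k, by positivity, fun c u hu v hv => ?_⟩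
  have hS : 0 ≤ ∑ j, c j ^ 2 := Finset.sum_nonneg fun j _ => sq_nonneg _
  refine ⟨(H₀ c u hu v hv).trans (mul_le_mul_of_nonneg_right (by linarith) hS),
    fun i => (H₁ i c u hu v hv).trans (mul_le_mul_of_nonneg_right ?_ hS),
    fun i k => (H₂ i k c u hu v hv).trans (mul_le_mul_of_nonneg_right ?_ hS)⟩
  · have := Finset.single_le_sum (fun i _ => h₁ i) (Finset.mem_univ i)
    linarith
  · have e1 := Finset.single_le_sum (fun k _ => h₂ i k) (Finset.mem_univ k)
    have e2 := Finset.single_le_sum (f := fun i => ∑ k, K₂ i k)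
      (fun i _ => Finset.sum_nonneg fun k _ => h₂ i k) (Finset.mem_univ i)
    linarith

/-! ### Scaling to a general rectangle -/

/-- Scaling estimate: a pointwise bound `B` for the squares of `p` and its derivatives up to order two
on the unit square bounds the `H²` norm of the pullback. Each derivative costs a factor `s1⁻¹` or
`s2⁻¹`, so two of them cost at most `m ^ 2` after squaring, and there are six terms. -/
lemma polyH2sq_pull_le {x0 y0 s1 s2 m B : ℝ} (hs1 : 0 < s1) (hs2 : 0 < s2) (hm : 1 ≤ m)
    (hm1 : s1⁻¹ ^ 2 ≤ m) (hm2 : s2⁻¹ ^ 2 ≤ m) (p : MvPolynomial (Fin 2) ℝ)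
    (h : ∀ u ∈ Set.Icc (0 : ℝ) 1, ∀ v ∈ Set.Icc (0 : ℝ) 1, (pev p u v) ^ 2 ≤ B ∧
      (∀ i, (pev (MvPolynomial.pderiv i p) u v) ^ 2 ≤ B) ∧
      ∀ i k, (pev (MvPolynomial.pderiv i (MvPolynomial.pderiv k p)) u v) ^ 2 ≤ B) :
    polyH2sq x0 y0 s1 s2 (pull x0 y0 s1 s2 p) ≤ 6 * (m ^ 2 * B) * s2 * s1 := by
  have hmem : ∀ {t a s : ℝ}, 0 < s → t ∈ Set.uIoc a (a + s) →
      s⁻¹ * (t - a) ∈ Set.Icc (0 : ℝ) 1 := fun {t a s} hs ht => by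
    rw [Set.uIoc_of_le (by linarith)] at ht
    rw [inv_mul_eq_div]
    exact ⟨div_nonneg (by linarith [ht.1]) hs.le, (div_le_one hs).2 (by linarith [ht.2])⟩
  have hm0 : 0 ≤ m := by linarith
  have hsc : ∀ {w z : ℝ}, w ≤ m ^ 2 → z ^ 2 ≤ B → w * z ^ 2 ≤ m ^ 2 * B := fun hw hz =>
    mul_le_mul hw hz (sq_nonneg _) (sq_nonneg _)
  refine (Real.le_norm_self _).trans ?_
  refine (intervalIntegral.norm_integral_le_of_norm_le_const (C := 6 * (m ^ 2 * B) * s2)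
    fun x hx => ?_).trans_eq (by rw [add_sub_cancel_left, abs_of_pos hs1])
  refine (intervalIntegral.norm_integral_le_of_norm_le_const (C := 6 * (m ^ 2 * B))
    fun y hy => ?_).trans_eq (by rw [add_sub_cancel_left, abs_of_pos hs2])
  obtain ⟨b0, b1, b2⟩ := h _ (hmem hs1 hx) _ (hmem hs2 hy)
  have pC : ∀ (w : ℝ) (q : MvPolynomial (Fin 2) ℝ) (x y : ℝ),
      pev (MvPolynomial.C w * q) x y = w * pev q x y := fun w q x y => by simp [pev]
  rw [Real.norm_of_nonneg (by positivity)]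
  simp only [pderiv_zero_pull, pderiv_one_pull, MvPolynomial.pderiv_C_mul, pC, pev_pull,
    mul_pow]
  have mm : m ≤ m ^ 2 := by nlinarith
  have sq1 : 0 ≤ s1⁻¹ ^ 2 := sq_nonneg _
  have sq2 : 0 ≤ s2⁻¹ ^ 2 := sq_nonneg _
  have t0 := hsc (w := 1) (by nlinarith) b0
  have t1 := hsc (hm1.trans mm) (b1 0)
  have t2 := hsc (hm2.trans mm) (b1 1)
  have t3 := hsc (w := s1⁻¹ ^ 2 * s1⁻¹ ^ 2) (by nlinarith) (b2 0 0)
  have t4 := hsc (w := s2⁻¹ ^ 2 * s1⁻¹ ^ 2) (by nlinarith) (b2 0 1)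
  have t5 := hsc (w := s2⁻¹ ^ 2 * s2⁻¹ ^ 2) (by nlinarith) (b2 1 1)
  linarith

/-- **Vertex interpolation on rectangles.** For every `0 < c1 ≤ c2` there is a constant
`C = C(c1,c2)` such that, on every axis-parallel rectangle whose side lengths lie in
`[c1, c2]`, arbitrary values `a_l`, `b_l`, `c_l` of a function and of its two first
derivatives at the four vertices can be interpolated by a polynomial `r` of total degree
at most four with `‖r‖²_{H²(R)} ≤ C Σ_l (|a_l|² + |b_l|² + |c_l|²)`. -/
theorem rectangle_vertex_interpolation :
    ∀ c1 c2 : ℝ, 0 < c1 → c1 ≤ c2 →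
      ∃ C : ℝ, 0 < C ∧
        ∀ x0 y0 s1 s2 : ℝ, s1 ∈ Set.Icc c1 c2 → s2 ∈ Set.Icc c1 c2 →
          ∀ a b c : Fin 4 → ℝ,
            ∃ r : MvPolynomial (Fin 2) ℝ, r.totalDegree ≤ 4 ∧
              (∀ l : Fin 4,
                pev r (Qx x0 s1 l) (Qy y0 s2 l) = a l ∧
                pev (MvPolynomial.pderiv (0 : Fin 2) r) (Qx x0 s1 l) (Qy y0 s2 l) = b l ∧
                pev (MvPolynomial.pderiv (1 : Fin 2) r) (Qx x0 s1 l) (Qy y0 s2 l) = c l) ∧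
              polyH2sq x0 y0 s1 s2 r ≤ C * ∑ l, ((a l)^2 + (b l)^2 + (c l)^2) := by
  intro c1 c2 hc1 hc12
  obtain ⟨K, hK, H⟩ := exists_refInterp_bound
  set m : ℝ := 1 + c1⁻¹ ^ 2 with hm
  have hc2 : 0 < c2 := hc1.trans_le hc12
  -- the summand `1` makes the constant positive even if `K = 0`
  refine ⟨6 * (m ^ 2 * (K * (1 + c2 ^ 2))) * c2 * c2 + 1, by positivity, ?_⟩
  intro x0 y0 s1 s2 hs1 hs2 a b c
  have p1 : 0 < s1 := hc1.trans_le hs1.1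
  have p2 : 0 < s2 := hc1.trans_le hs2.1
  -- first derivatives are multiplied by the side lengths when moved to the unit square
  set d : Fin 4 × Fin 3 → ℝ := fun j => ![a j.1, s1 * b j.1, s2 * c j.1] j.2 with hd
  have hQx : ∀ l, s1⁻¹ * (Qx x0 s1 l - x0) = Qx 0 1 l := fun l => by
    fin_cases l <;> simp [Qx, p1.ne']
  have hQy : ∀ l, s2⁻¹ * (Qy y0 s2 l - y0) = Qy 0 1 l := fun l => by
    fin_cases l <;> simp [Qy, p2.ne']
  refine ⟨pull x0 y0 s1 s2 (refInterp d),
    (totalDegree_pull_le _ _ _ _ _).trans (totalDegree_refInterp_le d), fun l => ?_, ?_⟩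
  · obtain ⟨h0, h1, h2⟩ := refInterp_vertex d l
    have pC : ∀ (w : ℝ) (q : MvPolynomial (Fin 2) ℝ) (x y : ℝ),
        pev (MvPolynomial.C w * q) x y = w * pev q x y := fun w q x y => by simp [pev]
    rw [pderiv_zero_pull, pderiv_one_pull, pC, pC]
    simp only [pev_pull, hQx, hQy, h0, h1, h2]
    refine ⟨rfl, ?_, ?_⟩
    · exact inv_mul_cancel_left₀ p1.ne' _
    · exact inv_mul_cancel_left₀ p2.ne' _
  · set S : ℝ := ∑ l, ((a l)^2 + (b l)^2 + (c l)^2) with hS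
    have hS0 : 0 ≤ S := Finset.sum_nonneg fun l _ => by positivity
    have q1 : s1 ^ 2 ≤ c2 ^ 2 := pow_le_pow_left₀ p1.le hs1.2 2
    have q2 : s2 ^ 2 ≤ c2 ^ 2 := pow_le_pow_left₀ p2.le hs2.2 2
    have hdS : ∑ j, d j ^ 2 ≤ (1 + c2 ^ 2) * S := by
      rw [Fintype.sum_prod_type, hS, Finset.mul_sum]
      refine Finset.sum_le_sum fun l _ => ?_
      simp only [hd, Fin.sum_univ_three, Matrix.cons_val, mul_pow]
      have i1 := mul_le_mul_of_nonneg_right q1 (sq_nonneg (b l))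
      have i2 := mul_le_mul_of_nonneg_right q2 (sq_nonneg (c l))
      nlinarith [sq_nonneg (a l), sq_nonneg (b l), sq_nonneg (c l),
        mul_nonneg (sq_nonneg c2) (sq_nonneg (a l))]
    have hB : ∀ {t : ℝ}, t ≤ K * ∑ j, d j ^ 2 → t ≤ K * ((1 + c2 ^ 2) * S) := fun ht =>
      ht.trans (mul_le_mul_of_nonneg_left hdS hK)
    have hmi : ∀ {s : ℝ}, c1 ≤ s → s⁻¹ ^ 2 ≤ m := fun {s} hs => by
      have : s⁻¹ ^ 2 ≤ c1⁻¹ ^ 2 :=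
        pow_le_pow_left₀ (inv_nonneg.2 (hc1.le.trans hs)) (inv_anti₀ hc1 hs) 2
      linarith
    have hmain := polyH2sq_pull_le (x0 := x0) (y0 := y0) (B := K * ((1 + c2 ^ 2) * S)) p1 p2
      (by rw [hm]; linarith [sq_nonneg c1⁻¹]) (hmi hs1.1) (hmi hs2.1)
      (refInterp d) fun u hu v hv =>
        ⟨hB (H d u hu v hv).1, fun i => hB ((H d u hu v hv).2.1 i),
          fun i k => hB ((H d u hu v hv).2.2 i k)⟩
    refine hmain.trans ?_
    have hss : s2 * s1 ≤ c2 * c2 := mul_le_mul hs2.2 hs1.2 p1.le hc2.le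
    calc 6 * (m ^ 2 * (K * ((1 + c2 ^ 2) * S))) * s2 * s1
        = 6 * (m ^ 2 * (K * ((1 + c2 ^ 2) * S))) * (s2 * s1) := by ring
      _ ≤ 6 * (m ^ 2 * (K * ((1 + c2 ^ 2) * S))) * (c2 * c2) :=
          mul_le_mul_of_nonneg_left hss (by positivity)
      _ ≤ (6 * (m ^ 2 * (K * (1 + c2 ^ 2))) * c2 * c2 + 1) * S := by linarith
end
end

section
/- There is a constant C, depending only on δ > 0, such that for every integer W ≥ 2 and all polynomials f and g of degree at most W on [0, δ] satisfying f(0) = g(0) = 0: ∫_0^δ |f(t) − g(t)|² dt/t ≤ C (ln W)² ( ‖f‖²_{1/2,(0,δ)} + ‖g‖²_{1/2,(0,δ)} ). -/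
/-!
Put `h = f - g`, a polynomial of degree at most `W` with `h(0) = 0`, and let `M = max |h|` on
`[0, δ]`, attained at `x₀`. The parallelogram inequality (`H12sqI_sub_le`) reduces the claim to
`h`, and each of two independent steps costs one logarithm.

* `weighted_le`: `∫₀^δ h²/t dt ≤ C (ln W) M²`. Markov's inequality gives `|h(t)| ≤ K M t` with
  `K = 4W²/δ`, so the singularity at `0` is cut off at `t ~ 1/K`.
* `sup_sq_le`: `M² ≤ C (ln W) ‖h‖²_{1/2}`. After a reflection, `x₀ ≤ δ/2`. Consider the means of
  `h` over the dyadic shells to the right of `x₀`. The shells are disjoint, so the sum of the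
  squared increments of consecutive means is bounded by a single Gagliardo seminorm
  (`sum_sq_dyadicMean_le`). By Markov's inequality, after `n ~ ln W` shells the mean is within
  `M/2` of `h(x₀)`. Cauchy–Schwarz on the telescoping sum loses exactly the factor `n`
  (`sq_le_of_osc`).

Markov's inequality is needed only up to a constant (`markov_lipschitz`). It follows from the
extremality of the Chebyshev polynomial `T_W` for the derivative at an endpoint, since each point of
`[0, δ]` is an endpoint of a subinterval of length at least `δ/2`.
-/

noncomputable section
open MeasureTheory Real

/-- Squared (Gagliardo) `H^{1/2}` norm on the interval `(a,b)`:
`‖v‖²_{L²} + ∫∫ |v(x)-v(y)|²/|x-y|² dx dy`. -/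
def H12sqI (a b : ℝ) (v : ℝ → ℝ) : ℝ :=
  (∫ t in a..b, (v t)^2) + ∫ x in a..b, ∫ y in a..b, (v x - v y)^2 / (x - y)^2

/-! ### The Gagliardo seminorm -/

/-- Inner integral of the Gagliardo seminorm: `∫₀^δ |v(x)-v(y)|²/|x-y|² dy`. -/
def gagInner (δ : ℝ) (v : ℝ → ℝ) (x : ℝ) : ℝ :=
  ∫ y in (0:ℝ)..δ, (v x - v y)^2 / (x - y)^2

lemma gagInner_nonneg {δ : ℝ} (hδ : 0 < δ) (v : ℝ → ℝ) (x : ℝ) : 0 ≤ gagInner δ v x :=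
  intervalIntegral.integral_nonneg hδ.le fun _ _ => by positivity

lemma H12sqI_nonneg {δ : ℝ} (hδ : 0 < δ) (v : ℝ → ℝ) : 0 ≤ H12sqI 0 δ v :=
  add_nonneg (intervalIntegral.integral_nonneg hδ.le fun _ _ => by positivity)
    (intervalIntegral.integral_nonneg hδ.le fun x _ => gagInner_nonneg hδ v x)

/-- At `t = 0` the quotient is `0`, so the bound also holds on the diagonal of the Gagliardo
integrand. -/
lemma diffQuot_sq_le {K s t : ℝ} (h : |s| ≤ K * |t|) : s^2 / t^2 ≤ K^2 := by
  rcases eq_or_ne t 0 with rfl | ht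
  · simp [sq_nonneg]
  · rw [div_le_iff₀ (by positivity), ← sq_abs s, ← sq_abs t, ← mul_pow]
    gcongr

section Gagliardo

variable {δ K : ℝ} {v : ℝ → ℝ}

lemma intervalIntegrable_diffQuot (hδ : 0 < δ) (hv : Continuous v)
    (hK : ∀ x ∈ Set.Icc 0 δ, ∀ y ∈ Set.Icc 0 δ, |v x - v y| ≤ K * |x - y|)
    {x : ℝ} (hx : x ∈ Set.Icc 0 δ) :
    IntervalIntegrable (fun y => (v x - v y)^2 / (x - y)^2) volume 0 δ := by
  rw [intervalIntegrable_iff_integrableOn_Ioc_of_le hδ.le]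
  have hm := hv.measurable
  refine Measure.integrableOn_of_bounded (M := K^2) (by simp)
    (Measurable.aestronglyMeasurable (by fun_prop)) ?_
  filter_upwards [ae_restrict_mem measurableSet_Ioc] with y hy
  rw [Real.norm_of_nonneg (by positivity)]
  exact diffQuot_sq_le (hK x hx y ⟨hy.1.le, hy.2⟩)

lemma intervalIntegrable_gagInner (hδ : 0 < δ) (hv : Continuous v)
    (hK : ∀ x ∈ Set.Icc 0 δ, ∀ y ∈ Set.Icc 0 δ, |v x - v y| ≤ K * |x - y|) :
    IntervalIntegrable (gagInner δ v) volume 0 δ := by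
  rw [intervalIntegrable_iff_integrableOn_Ioc_of_le hδ.le]
  have hm := hv.measurable
  have hmeas : StronglyMeasurable (gagInner δ v) := by
    have : Measurable (fun z : ℝ × ℝ => (v z.1 - v z.2)^2 / (z.1 - z.2)^2) := by fun_prop
    have h := StronglyMeasurable.integral_prod_right
      (f := fun x y => (v x - v y)^2 / (x - y)^2) this.stronglyMeasurable (ν := volume.restrict (Set.Ioc 0 δ))
    convert h using 1
    ext x
    simp [gagInner, intervalIntegral.integral_of_le hδ.le]
  refine Measure.integrableOn_of_bounded (M := K^2 * δ) (by simp) hmeas.aestronglyMeasurable ?_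
  filter_upwards [ae_restrict_mem measurableSet_Ioc] with x hx
  have hx' : x ∈ Set.Icc 0 δ := ⟨hx.1.le, hx.2⟩
  rw [Real.norm_of_nonneg (gagInner_nonneg hδ v x)]
  calc gagInner δ v x ≤ ∫ y in (0:ℝ)..δ, K^2 :=
        intervalIntegral.integral_mono_on hδ.le (intervalIntegrable_diffQuot hδ hv hK hx')
          (by simp) fun y hy => diffQuot_sq_le (hK x hx' y hy)
    _ = K^2 * δ := by simp; ring

/-- Parallelogram inequality for the squared norm. -/
lemma H12sqI_sub_le {K' : ℝ} {w : ℝ → ℝ} (hδ : 0 < δ) (hv : Continuous v) (hw : Continuous w)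
    (hK : ∀ x ∈ Set.Icc 0 δ, ∀ y ∈ Set.Icc 0 δ, |v x - v y| ≤ K * |x - y|)
    (hK' : ∀ x ∈ Set.Icc 0 δ, ∀ y ∈ Set.Icc 0 δ, |w x - w y| ≤ K' * |x - y|) :
    H12sqI 0 δ (fun t => v t - w t) ≤ 2 * (H12sqI 0 δ v + H12sqI 0 δ w) := by
  have hd : ∀ x ∈ Set.Icc 0 δ, ∀ y ∈ Set.Icc 0 δ,
      |(v x - w x) - (v y - w y)| ≤ (K + K') * |x - y| := fun x hx y hy => by
    calc |(v x - w x) - (v y - w y)| = |(v x - v y) - (w x - w y)| := by congr 1; ring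
      _ ≤ |v x - v y| + |w x - w y| := abs_sub _ _
      _ ≤ (K + K') * |x - y| := by linarith [hK x hx y hy, hK' x hx y hy]
  have h1 : ∫ t in (0:ℝ)..δ, (v t - w t)^2
      ≤ 2 * (∫ t in (0:ℝ)..δ, (v t)^2) + 2 * ∫ t in (0:ℝ)..δ, (w t)^2 := by
    rw [← intervalIntegral.integral_const_mul, ← intervalIntegral.integral_const_mul,
      ← intervalIntegral.integral_add (Continuous.intervalIntegrable (by fun_prop) _ _)
        (Continuous.intervalIntegrable (by fun_prop) _ _)]
    refine intervalIntegral.integral_mono_on hδ.le (Continuous.intervalIntegrable (by fun_prop) _ _)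
      (Continuous.intervalIntegrable (by fun_prop) _ _) fun t _ => ?_
    nlinarith [sq_nonneg (v t + w t)]
  have h2 : ∫ x in (0:ℝ)..δ, gagInner δ (fun t => v t - w t) x
      ≤ 2 * (∫ x in (0:ℝ)..δ, gagInner δ v x) + 2 * ∫ x in (0:ℝ)..δ, gagInner δ w x := by
    have iv := intervalIntegrable_gagInner hδ hv hK
    have iw := intervalIntegrable_gagInner hδ hw hK'
    rw [← intervalIntegral.integral_const_mul, ← intervalIntegral.integral_const_mul,
      ← intervalIntegral.integral_add (iv.const_mul 2) (iw.const_mul 2)]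
    refine intervalIntegral.integral_mono_on hδ.le
      (intervalIntegrable_gagInner hδ (hv.sub hw) hd)
      ((iv.const_mul 2).add (iw.const_mul 2)) fun x hx => ?_
    have jv := intervalIntegrable_diffQuot hδ hv hK hx
    have jw := intervalIntegrable_diffQuot hδ hw hK' hx
    unfold gagInner
    rw [← intervalIntegral.integral_const_mul, ← intervalIntegral.integral_const_mul,
      ← intervalIntegral.integral_add (jv.const_mul 2) (jw.const_mul 2)]
    refine intervalIntegral.integral_mono_on hδ.le
      (intervalIntegrable_diffQuot hδ (hv.sub hw) hd hx)
      ((jv.const_mul 2).add (jw.const_mul 2)) fun y _ => ?_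
    rw [← mul_div_assoc, ← mul_div_assoc, ← add_div]
    gcongr
    nlinarith [sq_nonneg ((v x - v y) + (w x - w y))]
  unfold H12sqI
  unfold gagInner at h2
  linarith

/-! ### Means over dyadic shells -/

/-- Cauchy–Schwarz against the constant `1`. -/
lemma sq_integral_le {w : ℝ → ℝ} (hw : Continuous w) {a b : ℝ} (hab : a < b) :
    (∫ x in a..b, w x)^2 ≤ (b - a) * ∫ x in a..b, (w x)^2 := by
  set A := ∫ x in a..b, w x
  have hl : 0 < b - a := sub_pos.2 hab
  have h0 : 0 ≤ ∫ x in a..b, (w x - A / (b - a))^2 :=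
    intervalIntegral.integral_nonneg hab.le fun _ _ => by positivity
  have h1 : ∫ x in a..b, (w x - A / (b - a))^2
      = (∫ x in a..b, (w x)^2) - A^2 / (b - a) := by
    have : (fun x => (w x - A / (b - a))^2)
        = fun x => (w x)^2 - (2 * (A / (b - a)) * w x - (A / (b - a))^2) := by
      ext x; ring
    rw [this, intervalIntegral.integral_sub (Continuous.intervalIntegrable (by fun_prop) _ _)
      (Continuous.intervalIntegrable (by fun_prop) _ _),
      intervalIntegral.integral_sub (Continuous.intervalIntegrable (by fun_prop) _ _)
      (Continuous.intervalIntegrable (by fun_prop) _ _), intervalIntegral.integral_const_mul]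
    simp only [intervalIntegral.integral_const, smul_eq_mul]
    change _ - (2 * (A / (b - a)) * A - _) = _
    field_simp
    ring
  have h2 : A^2 / (b - a) ≤ ∫ x in a..b, (w x)^2 := by linarith
  rw [div_le_iff₀ hl] at h2
  linarith

/-- Mean value of `v` over `[a, b]`; it is `0` when `a = b`. -/
def mean (v : ℝ → ℝ) (a b : ℝ) : ℝ := (∫ x in a..b, v x) / (b - a)

lemma sq_mean_sub_le (hv : Continuous v) {a b : ℝ} (hab : a < b) (c : ℝ) :
    (mean v a b - c)^2 ≤ (∫ x in a..b, (v x - c)^2) / (b - a) := by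
  have hl : 0 < b - a := sub_pos.2 hab
  have h := sq_integral_le (w := fun x => v x - c) (by fun_prop) hab
  have e : ∫ x in a..b, (v x - c) = (b - a) * (mean v a b - c) := by
    rw [intervalIntegral.integral_sub (Continuous.intervalIntegrable (by fun_prop) _ _)
      (Continuous.intervalIntegrable (by fun_prop) _ _)]
    simp only [intervalIntegral.integral_const, smul_eq_mul, mean]
    field_simp
  rw [e] at h
  rw [le_div_iff₀ hl]
  nlinarith

/-- Means over two subintervals whose points are at most `D` apart differ by an amount controlled by
the part of the Gagliardo seminorm with `x` in the first one. -/
lemma sq_mean_sub_mean_le (hδ : 0 < δ) (hv : Continuous v)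
    (hK : ∀ x ∈ Set.Icc 0 δ, ∀ y ∈ Set.Icc 0 δ, |v x - v y| ≤ K * |x - y|)
    {a b c d D : ℝ} (ha : 0 ≤ a) (hab : a < b) (hb : b ≤ δ) (hc : 0 ≤ c) (hcd : c < d) (hd : d ≤ δ)
    (hD : ∀ x ∈ Set.Icc a b, ∀ y ∈ Set.Icc c d, |x - y| ≤ D) :
    (mean v a b - mean v c d)^2
      ≤ D^2 / ((b - a) * (d - c)) * ∫ x in a..b, gagInner δ v x := by
  have hl : 0 < b - a := sub_pos.2 hab
  have hl' : 0 < d - c := sub_pos.2 hcd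
  have iG : IntervalIntegrable (gagInner δ v) volume a b :=
    (intervalIntegrable_gagInner hδ hv hK).mono_set (by
      rw [Set.uIcc_of_le hab.le, Set.uIcc_of_le hδ.le]; exact Set.Icc_subset_Icc ha hb)
  have key : ∀ x ∈ Set.Icc a b, (v x - mean v c d)^2 ≤ D^2 / (d - c) * gagInner δ v x := by
    intro x hx
    have hx' : x ∈ Set.Icc 0 δ := ⟨ha.trans hx.1, hx.2.trans hb⟩
    have jv := intervalIntegrable_diffQuot hδ hv hK hx'
    have jv' : IntervalIntegrable (fun y => (v x - v y)^2 / (x - y)^2) volume c d :=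
      jv.mono_set (by
        rw [Set.uIcc_of_le hcd.le, Set.uIcc_of_le hδ.le]; exact Set.Icc_subset_Icc hc hd)
    have h1 := sq_mean_sub_le hv hcd (v x)
    have h2 : ∫ y in c..d, (v y - v x)^2 ≤ D^2 * gagInner δ v x := by
      calc ∫ y in c..d, (v y - v x)^2
          ≤ ∫ y in c..d, D^2 * ((v x - v y)^2 / (x - y)^2) := by
            refine intervalIntegral.integral_mono_on hcd.le
              (Continuous.intervalIntegrable (by fun_prop) _ _) (jv'.const_mul _) fun y hy => ?_
            rcases eq_or_ne x y with rfl | hne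
            · simp
            · have hp : 0 < (x - y)^2 := by
                have := sub_ne_zero.2 hne
                positivity
              rw [← mul_div_assoc, le_div_iff₀ hp, ← neg_sub (v x), neg_sq, mul_comm]
              have hxy := abs_le.1 (hD x hx y hy)
              exact mul_le_mul_of_nonneg_right (sq_le_sq' (by linarith) hxy.2) (sq_nonneg _)
        _ = D^2 * ∫ y in c..d, (v x - v y)^2 / (x - y)^2 :=
            intervalIntegral.integral_const_mul _ _
        _ ≤ D^2 * gagInner δ v x := by
            gcongr
            exact intervalIntegral.integral_mono_interval hc hcd.le hd
              (Filter.Eventually.of_forall fun y => by positivity) jv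
    calc (v x - mean v c d)^2 = (mean v c d - v x)^2 := by ring
      _ ≤ (∫ y in c..d, (v y - v x)^2) / (d - c) := h1
      _ ≤ (D^2 * gagInner δ v x) / (d - c) := by gcongr
      _ = _ := by ring
  calc (mean v a b - mean v c d)^2
      ≤ (∫ x in a..b, (v x - mean v c d)^2) / (b - a) := sq_mean_sub_le hv hab _
    _ ≤ (∫ x in a..b, D^2 / (d - c) * gagInner δ v x) / (b - a) := by
        gcongr
        exact intervalIntegral.integral_mono_on hab.le
          (Continuous.intervalIntegrable (by fun_prop) _ _) (iG.const_mul _) key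
    _ = _ := by
        rw [intervalIntegral.integral_const_mul]
        field_simp

/-- Mean over the dyadic shell `[x₀ + (δ/2) 2^{-j-1}, x₀ + (δ/2) 2^{-j}]`. -/
def dyadicMean (δ : ℝ) (v : ℝ → ℝ) (x₀ : ℝ) (j : ℕ) : ℝ :=
  mean v (x₀ + δ / 2 / 2^(j+1)) (x₀ + δ / 2 / 2^j)

/-- The shells are disjoint, so the squared increments of the means are summable against a single
copy of the Gagliardo seminorm. -/
lemma sum_sq_dyadicMean_le (hδ : 0 < δ) (hv : Continuous v)
    (hK : ∀ x ∈ Set.Icc 0 δ, ∀ y ∈ Set.Icc 0 δ, |v x - v y| ≤ K * |x - y|)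
    {x₀ : ℝ} (h0 : 0 ≤ x₀) (h1 : x₀ ≤ δ / 2) (n : ℕ) :
    ∑ j ∈ Finset.range n, (dyadicMean δ v x₀ j - dyadicMean δ v x₀ (j+1))^2
      ≤ 8 * ∫ x in (0:ℝ)..δ, gagInner δ v x := by
  have iG := intervalIntegrable_gagInner hδ hv hK
  have r1 : ∀ j : ℕ, δ / 2 / 2^(j+1) = (δ / 2 / 2^j) / 2 := fun j => by
    rw [pow_succ]; field_simp
  have rpos : ∀ j : ℕ, 0 < δ / 2 / 2^j := fun j => by positivity
  have rle : ∀ j : ℕ, δ / 2 / 2^j ≤ δ / 2 := fun j =>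
    div_le_self (by positivity) (one_le_pow₀ (by norm_num))
  have step : ∀ n : ℕ, ∑ j ∈ Finset.range n, (dyadicMean δ v x₀ j - dyadicMean δ v x₀ (j+1))^2
      ≤ 8 * ∫ x in (x₀ + δ / 2 / 2^n)..(x₀ + δ / 2), gagInner δ v x := by
    intro n
    induction n with
    | zero => simp
    | succ n ih =>
      rw [Finset.sum_range_succ]
      have hr := rpos n
      have hr' := rle n
      have e1 := r1 n
      have e2 := r1 (n+1)
      have sub : ∀ a b : ℝ, 0 ≤ a → a ≤ b → b ≤ δ →
          IntervalIntegrable (gagInner δ v) volume a b := fun a b ha hab hb =>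
        iG.mono_set (by
          rw [Set.uIcc_of_le hab, Set.uIcc_of_le hδ.le]; exact Set.Icc_subset_Icc ha hb)
      have h := sq_mean_sub_mean_le hδ hv hK (a := x₀ + δ / 2 / 2^(n+1)) (b := x₀ + δ / 2 / 2^n)
        (c := x₀ + δ / 2 / 2^(n+1+1)) (d := x₀ + δ / 2 / 2^(n+1)) (D := δ / 2 / 2^n)
        (by linarith) (by linarith) (by linarith) (by linarith) (by linarith) (by linarith)
        (fun x hx y hy => by
          obtain ⟨hx1, hx2⟩ := hx
          obtain ⟨hy1, hy2⟩ := hy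
          rw [abs_le]; constructor <;> linarith)
      have e3 : (δ / 2 / 2^n)^2 / ((x₀ + δ / 2 / 2^n - (x₀ + δ / 2 / 2^(n+1))) *
          (x₀ + δ / 2 / 2^(n+1) - (x₀ + δ / 2 / 2^(n+1+1)))) = 8 := by
        rw [e2, e1]
        generalize δ / 2 / 2^n = r at hr
        rw [div_eq_iff (by ring_nf; positivity)]
        ring
      rw [e3] at h
      rw [← intervalIntegral.integral_add_adjacent_intervals
        (sub (x₀ + δ / 2 / 2^(n+1)) (x₀ + δ / 2 / 2^n) (by linarith) (by linarith) (by linarith))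
        (sub (x₀ + δ / 2 / 2^n) (x₀ + δ / 2) (by linarith) (by linarith) (by linarith))]
      unfold dyadicMean at ih ⊢
      linarith
  refine (step n).trans ?_
  gcongr
  exact intervalIntegral.integral_mono_interval (by linarith [rpos n]) (by linarith [rle n])
    (by linarith) (Filter.Eventually.of_forall fun x => gagInner_nonneg hδ v x) iG

/-- Discrete Sobolev inequality: if `v` varies by at most `M/2` on `[x₀, x₀ + (δ/2) 2^{-n}]`,
where `M = |v(x₀)|`, then `M²` exceeds the squared norm by a factor of at most order `n`. -/
lemma sq_le_of_osc (hδ : 0 < δ) (hv : Continuous v)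
    (hK : ∀ x ∈ Set.Icc 0 δ, ∀ y ∈ Set.Icc 0 δ, |v x - v y| ≤ K * |x - y|)
    {x₀ : ℝ} (h0 : 0 ≤ x₀) (h1 : x₀ ≤ δ / 2) (n : ℕ) (hn : 1 ≤ n)
    (hosc : ∀ x ∈ Set.Icc x₀ (x₀ + δ / 2 / 2^n), |v x - v x₀| ≤ |v x₀| / 2) :
    (v x₀)^2 ≤ (64 + 32 / δ) * n * H12sqI 0 δ v := by
  have hn' : (1:ℝ) ≤ n := by exact_mod_cast hn
  have hr : δ / 2 / 2^(n+1) < δ / 2 / 2^n := by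
    gcongr <;> norm_num
  have hrp : 0 < δ / 2 / 2^(n+1) := by positivity
  set L := ∫ t in (0:ℝ)..δ, (v t)^2 with hL
  set G := ∫ x in (0:ℝ)..δ, gagInner δ v x with hG
  have hL0 : 0 ≤ L := intervalIntegral.integral_nonneg hδ.le fun _ _ => by positivity
  have hG0 : 0 ≤ G := intervalIntegral.integral_nonneg hδ.le fun _ _ => gagInner_nonneg hδ v _
  have hlast : (dyadicMean δ v x₀ n - v x₀)^2 ≤ (v x₀)^2 / 4 := by
    refine (sq_mean_sub_le hv (by linarith) (v x₀)).trans ?_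
    rw [div_le_iff₀ (by linarith)]
    calc _ ≤ ∫ x in (x₀ + δ / 2 / 2^(n+1))..(x₀ + δ / 2 / 2^n), (v x₀)^2 / 4 := by
          refine intervalIntegral.integral_mono_on (by linarith)
            (Continuous.intervalIntegrable (by fun_prop) _ _) (by simp) fun x hx => ?_
          have := hosc x ⟨by linarith [hx.1], hx.2⟩
          calc (v x - v x₀)^2 = |v x - v x₀|^2 := (sq_abs _).symm
            _ ≤ (|v x₀| / 2)^2 := by gcongr
            _ = (v x₀)^2 / 4 := by rw [div_pow, sq_abs]; norm_num
      _ = _ := by simp only [intervalIntegral.integral_const, smul_eq_mul]; ring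
  have hfirst : (dyadicMean δ v x₀ 0)^2 ≤ 4 / δ * L := by
    have h := sq_mean_sub_le hv (a := x₀ + δ / 2 / 2^(0+1)) (b := x₀ + δ / 2 / 2^0)
      (by norm_num; linarith) 0
    have hle : ∫ x in (x₀ + δ / 2 / 2^(0+1))..(x₀ + δ / 2 / 2^0), (v x - 0)^2 ≤ L := by
      simp only [sub_zero]
      refine intervalIntegral.integral_mono_interval ?_ ?_ ?_
        (Filter.Eventually.of_forall fun x => by positivity)
        (Continuous.intervalIntegrable (by fun_prop) _ _) <;> norm_num <;> linarith
    rw [sub_zero] at h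
    refine h.trans ?_
    have e : x₀ + δ / 2 / 2^0 - (x₀ + δ / 2 / 2^(0+1)) = δ / 4 := by ring
    rw [e]
    calc _ ≤ L / (δ / 4) := by gcongr
      _ = _ := by field_simp
  have htel : (dyadicMean δ v x₀ 0 - dyadicMean δ v x₀ n)^2 ≤ n * (8 * G) := by
    rw [← Finset.sum_range_sub']
    refine sq_sum_le_card_mul_sum_sq.trans ?_
    rw [Finset.card_range]
    gcongr
    exact sum_sq_dyadicMean_le hδ hv hK h0 h1 n
  generalize dyadicMean δ v x₀ 0 = p at *
  generalize dyadicMean δ v x₀ n = q at *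
  have hq : (v x₀)^2 ≤ 4 * q^2 := by
    have h3 : |q - v x₀| ≤ |v x₀| / 2 := by
      refine abs_le_of_sq_le_sq ?_ (by positivity)
      rw [div_pow, sq_abs]; linarith
    have h4 : |v x₀| ≤ |q| + |q - v x₀| := by
      have := abs_sub_abs_le_abs_sub (v x₀) q
      rw [abs_sub_comm] at this
      linarith
    have h5 : |v x₀| ≤ 2 * |q| := by linarith
    calc (v x₀)^2 = |v x₀|^2 := (sq_abs _).symm
      _ ≤ (2 * |q|)^2 := by gcongr
      _ = 4 * q^2 := by rw [mul_pow, sq_abs]; norm_num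
  have hE : H12sqI 0 δ v = L + G := rfl
  rw [hE]
  have h6 : q^2 ≤ 2 * p^2 + 2 * (p - q)^2 := by nlinarith [sq_nonneg (2 * p - q)]
  have h7 : 4 / δ * L ≤ n * (4 / δ * L) := le_mul_of_one_le_left (by positivity) hn'
  have h8 : 0 ≤ (n:ℝ) * L := by positivity
  have h9 : 0 ≤ 32 / δ * (n * G) := by positivity
  have h10 : (n:ℝ) * (4 / δ * L) * 8 = 32 / δ * (n * L) := by ring
  nlinarith

end Gagliardo

lemma H12sqI_reflect (δ : ℝ) (v : ℝ → ℝ) :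
    H12sqI 0 δ (fun t => v (δ - t)) = H12sqI 0 δ v := by
  unfold H12sqI
  congr 1
  · simpa using intervalIntegral.integral_comp_sub_left (a := 0) (b := δ) (fun t => (v t)^2) δ
  · have h : ∀ x : ℝ, ∫ y in (0:ℝ)..δ, (v (δ - x) - v (δ - y))^2 / (x - y)^2
        = ∫ y in (0:ℝ)..δ, (v (δ - x) - v y)^2 / ((δ - x) - y)^2 := fun x => by
      have := intervalIntegral.integral_comp_sub_left (a := 0) (b := δ)
        (fun y => (v (δ - x) - v y)^2 / ((δ - x) - y)^2) δ
      simp only [sub_self, sub_zero] at this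
      rw [← this]
      congr 1; ext y; congr 1; ring
    simp only [h]
    simpa using intervalIntegral.integral_comp_sub_left (a := 0) (b := δ)
      (fun x => ∫ y in (0:ℝ)..δ, (v x - v y)^2 / (x - y)^2) δ

/-! ### Markov's inequality -/

open Polynomial in
/-- Endpoint Markov inequality on `[[x, c]]`: transport to `[-1, 1]` with `x ↦ 1`, where the
Chebyshev polynomial `T_W` is extremal and `T_W'(1) = W²`. -/
lemma markov_endpoint {W : ℕ} {p : ℝ[X]} (hp : p.natDegree ≤ W) {x c M : ℝ} (hM : 0 < M)
    (hb : ∀ y ∈ Set.uIcc x c, |p.eval y| ≤ M) :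
    |c - x| / 2 * |p.derivative.eval x| ≤ M * (W:ℝ)^2 := by
  -- Normalize by `s = ±1/M`, since the extremality is one-sided and assumes the bound `1`.
  have main : ∀ s : ℝ, |s| = M⁻¹ → s * (-((c - x) / 2) * p.derivative.eval x) ≤ (W:ℝ)^2 := by
    intro s hs
    let A : ℝ[X] := C ((x + c) / 2) + C ((x - c) / 2) * X
    have hA : A.natDegree ≤ 1 := by
      refine (natDegree_add_le _ _).trans (max_le (by simp) ?_)
      exact (natDegree_C_mul_le _ _).trans natDegree_X_le
    have hdeg : (C s * p.comp A).degree ≤ W := by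
      refine natDegree_le_iff_degree_le.1 ((natDegree_C_mul_le _ _).trans ?_)
      refine natDegree_comp_le.trans ?_
      calc p.natDegree * A.natDegree ≤ W * 1 := Nat.mul_le_mul hp hA
        _ = W := mul_one _
    have h := Chebyshev.eval_iterate_derivative_le_of_forall_abs_le_one (k := 1) le_rfl hdeg
      (fun t ht => by
        have hmem : (x + c) / 2 + (x - c) / 2 * t ∈ Set.uIcc x c := by
          rw [Set.mem_uIcc]
          rcases le_total x c with hxc | hxc
          · left; constructor <;> nlinarith [ht.1, ht.2]
          · right; constructor <;> nlinarith [ht.1, ht.2]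
        have := hb _ hmem
        simp only [A, eval_mul, eval_C, eval_comp, eval_add, eval_X, abs_mul, hs]
        rw [inv_mul_le_iff₀ hM]
        linarith)
    simp only [Function.iterate_one, Chebyshev.T_derivative_eq_U] at h
    simp only [A, derivative_mul, derivative_comp, derivative_C, derivative_add, derivative_X,
      eval_mul, eval_add, eval_C, eval_X, eval_comp, zero_mul, zero_add, mul_one, Chebyshev.U_eval_one, eval_intCast] at h
    have e : (x + c) / 2 + (x - c) / 2 = x := by ring
    rw [e] at h
    push_cast at h
    calc _ = s * ((x - c) / 2 * p.derivative.eval x) := by ring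
      _ ≤ _ := h
      _ = _ := by ring
  have hMi : |M⁻¹| = M⁻¹ := abs_of_pos (by positivity)
  have h1 := main M⁻¹ hMi
  have h2 := main (-M⁻¹) (by rw [abs_neg, hMi])
  have h3 : |(c - x) / 2 * p.derivative.eval x| ≤ M * (W:ℝ)^2 := by
    rw [abs_le]
    have a1 : M * (M⁻¹ * (-((c - x) / 2) * p.derivative.eval x)) ≤ M * (W:ℝ)^2 := by gcongr
    have a2 : M * (-M⁻¹ * (-((c - x) / 2) * p.derivative.eval x)) ≤ M * (W:ℝ)^2 := by gcongr
    rw [mul_inv_cancel_left₀ hM.ne'] at a1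
    rw [neg_mul, mul_neg, mul_inv_cancel_left₀ hM.ne'] at a2
    constructor <;> linarith
  rwa [abs_mul, abs_div, abs_two] at h3

open Polynomial in
/-- Markov's inequality, up to the constant, in Lipschitz form: every point of `[0, δ]` is an
endpoint of a subinterval of length at least `δ/2`. -/
lemma markov_lipschitz {δ : ℝ} (hδ : 0 < δ) {W : ℕ} {p : ℝ[X]} (hp : p.natDegree ≤ W) {M : ℝ}
    (hM : 0 < M) (hb : ∀ y ∈ Set.Icc 0 δ, |p.eval y| ≤ M) :
    ∀ x ∈ Set.Icc 0 δ, ∀ y ∈ Set.Icc 0 δ,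
      |p.eval x - p.eval y| ≤ (4 * (W:ℝ)^2 / δ * M) * |x - y| := by
  have hder : ∀ x ∈ Set.Icc 0 δ, |p.derivative.eval x| ≤ 4 * (W:ℝ)^2 / δ * M := by
    intro x hx
    have : ∃ c ∈ Set.Icc 0 δ, δ / 2 ≤ |c - x| := by
      rcases le_total x (δ / 2) with h | h
      · exact ⟨δ, ⟨hδ.le, le_rfl⟩, by rw [abs_of_nonneg (by linarith)]; linarith⟩
      · exact ⟨0, ⟨le_rfl, hδ.le⟩, by rw [abs_of_nonpos (by linarith)]; linarith⟩
    obtain ⟨c, hc, hcx⟩ := this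
    have h := markov_endpoint hp hM (x := x) (c := c)
      (fun y hy => hb y (Set.uIcc_subset_Icc hx hc hy))
    have h2 : δ / 2 / 2 * |p.derivative.eval x| ≤ M * (W:ℝ)^2 := le_trans (by gcongr) h
    have e : 4 * (W:ℝ)^2 / δ * M = (M * (W:ℝ)^2) / (δ / 2 / 2) := by field_simp; ring
    rw [e, le_div_iff₀ (by positivity)]
    linarith
  intro x hx y hy
  have := (convex_Icc 0 δ).norm_image_sub_le_of_norm_deriv_le (f := fun t => p.eval t)
    (fun t _ => p.differentiable t) (fun t ht => by
      rw [Polynomial.deriv]; exact hder t ht) hy hx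
  simpa [Real.norm_eq_abs] using this

/-! ### The two logarithmic estimates -/

/-- A dyadic level `n` of order `ln W` that resolves the Markov scale `δ/(4W²)`. -/
lemma exists_scale {W : ℕ} (hW : 2 ≤ W) :
    ∃ n : ℕ, 1 ≤ n ∧ 4 * (W:ℝ)^2 ≤ 2^n ∧ (n:ℝ) ≤ 10 * Real.log W := by
  have hWr : (2:ℝ) ≤ W := by exact_mod_cast hW
  refine ⟨2 * Nat.log 2 W + 4, by omega, ?_, ?_⟩
  · have h : W ≤ 2^(Nat.log 2 W + 1) := (Nat.lt_pow_succ_log_self (by norm_num) W).le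
    have h' : (W:ℝ) ≤ 2^(Nat.log 2 W + 1) := by exact_mod_cast h
    calc 4 * (W:ℝ)^2 ≤ 4 * ((2:ℝ)^(Nat.log 2 W + 1))^2 := by gcongr
      _ = 2^(2 * Nat.log 2 W + 4) := by ring
  · have h : 2^(Nat.log 2 W) ≤ W := Nat.pow_log_le_self 2 (by omega)
    have h' : (2:ℝ)^(Nat.log 2 W) ≤ W := by exact_mod_cast h
    have h2 := Real.log_le_log (by positivity) h'
    rw [Real.log_pow] at h2
    have h3 := Real.log_le_log (by norm_num) hWr
    have h4 := Real.log_two_gt_d9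
    push_cast
    have h5 : (0:ℝ) ≤ Nat.log 2 W := by positivity
    nlinarith

open Polynomial in
/-- Inverse estimate: the sup norm of a polynomial exceeds its `H^{1/2}` norm by a factor of at
most order `√(ln W)`. -/
lemma sup_sq_le {δ : ℝ} (hδ : 0 < δ) {W : ℕ} (hW : 2 ≤ W) {p : ℝ[X]} (hp : p.natDegree ≤ W)
    {x₀ : ℝ} (hx₀ : x₀ ∈ Set.Icc 0 δ) (hmax : ∀ y ∈ Set.Icc 0 δ, |p.eval y| ≤ |p.eval x₀|)
    (hM : 0 < |p.eval x₀|) :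
    (p.eval x₀)^2 ≤ (64 + 32 / δ) * (10 * Real.log W) * H12sqI 0 δ (fun t => p.eval t) := by
  wlog hhalf : x₀ ≤ δ / 2 generalizing p x₀
  · have key : ∀ t, (p.comp (C δ - X)).eval t = p.eval (δ - t) := fun t => by simp
    have h := this (p := p.comp (C δ - X)) (x₀ := δ - x₀) (by
        refine natDegree_comp_le.trans ?_
        have : (C δ - X : ℝ[X]).natDegree ≤ 1 := (natDegree_sub_le _ _).trans (by simp)
        calc _ ≤ W * 1 := Nat.mul_le_mul hp this
          _ = W := mul_one _)
      ⟨by linarith [hx₀.2], by linarith [hx₀.1]⟩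
      (fun y hy => by
        rw [key, key, sub_sub_cancel]
        exact hmax _ ⟨by linarith [hy.2], by linarith [hy.1]⟩)
      (by rw [key, sub_sub_cancel]; exact hM) (by linarith)
    simp only [key, sub_sub_cancel] at h
    rwa [H12sqI_reflect δ (fun t => p.eval t)] at h
  obtain ⟨n, hn1, hn2, hn3⟩ := exists_scale hW
  have hlip := markov_lipschitz hδ hp hM hmax
  have hc : Continuous fun t => p.eval t := p.continuous
  have h := sq_le_of_osc (v := fun t => p.eval t) hδ hc hlip hx₀.1 hhalf n hn1 (by
    intro x hx
    have hle : δ / 2 / 2^n ≤ δ / 2 :=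
      div_le_self (by positivity) (one_le_pow₀ (by norm_num))
    have h1 := hlip x ⟨hx₀.1.trans hx.1, by linarith [hx.2]⟩ x₀ hx₀
    refine h1.trans ?_
    rw [abs_of_nonneg (by linarith [hx.1] : 0 ≤ x - x₀)]
    calc 4 * (W:ℝ)^2 / δ * |p.eval x₀| * (x - x₀)
        ≤ 4 * (W:ℝ)^2 / δ * |p.eval x₀| * (δ / 2 / 2^n) := by
          gcongr; linarith [hx.2]
      _ = (4 * (W:ℝ)^2) * (|p.eval x₀| / 2 / 2^n) := by field_simp
      _ ≤ 2^n * (|p.eval x₀| / 2 / 2^n) := by gcongr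
      _ = |p.eval x₀| / 2 := by field_simp)
  refine h.trans ?_
  have hE : 0 ≤ H12sqI 0 δ (fun t => p.eval t) :=
    H12sqI_nonneg hδ _
  gcongr

/-- The weighted integral loses one further logarithm against the sup norm: with `K = 4W²/δ`,
`v² ≤ M² min(1, K²t²)`, and `min(1, s²)/s ≤ 2s/(1 + s²)`, which has an explicit primitive. -/
lemma weighted_le {δ K M : ℝ} (hδ : 0 < δ) {v : ℝ → ℝ}
    (hb : ∀ t ∈ Set.Icc 0 δ, |v t| ≤ M) (hl : ∀ t ∈ Set.Icc 0 δ, |v t| ≤ K * M * t) :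
    ∫ t in (0:ℝ)..δ, (v t)^2 / t ≤ M^2 * Real.log (1 + K^2 * δ^2) := by
  have hder : ∀ t : ℝ, HasDerivAt (fun t => Real.log (1 + K^2 * t^2))
      ((2 * K^2 * t) / (1 + K^2 * t^2)) t := fun t => by
    have h1 : HasDerivAt (fun t : ℝ => 1 + K^2 * t^2) (2 * K^2 * t) t := by
      have := ((hasDerivAt_pow 2 t).const_mul (K^2)).const_add 1
      exact this.congr_deriv (by norm_num; ring)
    exact h1.log (by positivity)
  have hcont : Continuous fun t : ℝ => (2 * K^2 * t) / (1 + K^2 * t^2) :=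
    Continuous.div (by fun_prop) (by fun_prop) fun t => by positivity
  have hint : ∫ t in (0:ℝ)..δ, (2 * K^2 * t) / (1 + K^2 * t^2) = Real.log (1 + K^2 * δ^2) := by
    rw [intervalIntegral.integral_eq_sub_of_hasDerivAt (fun t _ => hder t)
      (hcont.intervalIntegrable _ _)]
    simp
  rw [← hint, ← intervalIntegral.integral_const_mul, intervalIntegral.integral_of_le hδ.le,
    intervalIntegral.integral_of_le hδ.le]
  refine integral_mono_of_nonneg ?_ ?_ ?_
  · filter_upwards [ae_restrict_mem measurableSet_Ioc] with t ht
    have := ht.1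
    positivity
  · exact ((hcont.intervalIntegrable 0 δ).const_mul _).1
  · filter_upwards [ae_restrict_mem measurableSet_Ioc] with t ht
    have ht0 := ht.1
    have ht' : t ∈ Set.Icc 0 δ := ⟨ht0.le, ht.2⟩
    have a1 : (v t)^2 ≤ M^2 := by rw [← sq_abs]; gcongr; exact hb t ht'
    have a2 : (v t)^2 ≤ (K * M * t)^2 := by rw [← sq_abs]; gcongr; exact hl t ht'
    have hp : 0 < 1 + K^2 * t^2 := by positivity
    rw [← mul_div_assoc, div_le_div_iff₀ ht0 hp]
    nlinarith [mul_le_mul_of_nonneg_right a1 (by positivity : 0 ≤ K^2 * t^2)]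

/-- **Estimate (7.7).** There is a constant `C = C(δ)` such that for all polynomials `f`,
`g` of degree at most `W ≥ 2` vanishing at `0`,
`∫₀^δ |f(t) - g(t)|² dt/t ≤ C (ln W)² (‖f‖²_{1/2,(0,δ)} + ‖g‖²_{1/2,(0,δ)})`. -/
theorem polynomial_weighted_jump_estimate :
    ∀ δ : ℝ, 0 < δ →
      ∃ C : ℝ, 0 < C ∧
        ∀ W : ℕ, 2 ≤ W → ∀ f g : Polynomial ℝ,
          f.natDegree ≤ W → g.natDegree ≤ W → f.eval 0 = 0 → g.eval 0 = 0 →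
          (∫ t in (0:ℝ)..δ, (f.eval t - g.eval t)^2 / t)
            ≤ C * (Real.log W)^2 *
              (H12sqI 0 δ (fun t => f.eval t) + H12sqI 0 δ (fun t => g.eval t)) := by
  intro δ hδ
  -- `180 = 10 * 9 * 2`: dyadic levels, weighted integral, parallelogram inequality.
  refine ⟨180 * (64 + 32 / δ), by positivity, ?_⟩
  intro W hW f g hf hg hf0 hg0
  have hWr : (2:ℝ) ≤ W := by exact_mod_cast hW
  have hlogW : 0 ≤ Real.log W := Real.log_nonneg (by linarith)
  have exb : ∀ p : Polynomial ℝ, ∃ x₀ ∈ Set.Icc 0 δ, ∀ y ∈ Set.Icc 0 δ,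
      |p.eval y| ≤ |p.eval x₀| := fun p =>
    isCompact_Icc.exists_isMaxOn (Set.nonempty_Icc.2 hδ.le) p.continuous.abs.continuousOn
  have exlip : ∀ p : Polynomial ℝ, p.natDegree ≤ W → ∃ K, ∀ x ∈ Set.Icc 0 δ, ∀ y ∈ Set.Icc 0 δ,
      |p.eval x - p.eval y| ≤ K * |x - y| := fun p hp => by
    obtain ⟨x₀, -, hx⟩ := exb p
    exact ⟨_, markov_lipschitz hδ hp (M := |p.eval x₀| + 1) (by positivity)
      fun y hy => (hx y hy).trans (by linarith)⟩
  obtain ⟨K₁, hK₁⟩ := exlip f hf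
  obtain ⟨K₂, hK₂⟩ := exlip g hg
  have hsub := H12sqI_sub_le hδ f.continuous g.continuous hK₁ hK₂
  have hE : 0 ≤ H12sqI 0 δ (fun t => f.eval t - g.eval t) :=
    H12sqI_nonneg hδ _
  have hdeg : (f - g).natDegree ≤ W := (Polynomial.natDegree_sub_le _ _).trans (max_le hf hg)
  obtain ⟨x₀, hx₀, hmax⟩ := exb (f - g)
  simp only [← Polynomial.eval_sub] at hsub hE ⊢
  rcases eq_or_lt_of_le (abs_nonneg ((f - g).eval x₀)) with hz | hM
  · -- `f = g` on `[0, δ]`; `markov_lipschitz` assumes a positive bound.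
    have hzero : ∫ t in (0:ℝ)..δ, ((f - g).eval t)^2 / t = 0 := by
      refine intervalIntegral.integral_zero_ae (Filter.Eventually.of_forall fun t ht => ?_)
      rw [Set.uIoc_of_le hδ.le] at ht
      have : (f - g).eval t = 0 := abs_nonpos_iff.1 ((hmax t ⟨ht.1.le, ht.2⟩).trans hz.symm.le)
      simp [this]
    rw [hzero]
    have : 0 ≤ H12sqI 0 δ (fun t => f.eval t) + H12sqI 0 δ (fun t => g.eval t) := by linarith
    positivity
  · have hlip := markov_lipschitz hδ hdeg hM hmax
    have hw := weighted_le (K := 4 * (W:ℝ)^2 / δ) hδ hmax (fun t ht => by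
      have h := hlip t ht 0 ⟨le_rfl, hδ.le⟩
      have h0 : (f - g).eval 0 = 0 := by simp [hf0, hg0]
      rwa [h0, sub_zero, sub_zero, abs_of_nonneg ht.1] at h)
    have hlog : Real.log (1 + (4 * (W:ℝ)^2 / δ)^2 * δ^2) ≤ 9 * Real.log W := by
      have e : 1 + (4 * (W:ℝ)^2 / δ)^2 * δ^2 = 1 + 16 * (W:ℝ)^4 := by field_simp; ring
      have h9 : Real.log ((W:ℝ)^9) = 9 * Real.log W := by
        rw [Real.log_pow]; norm_num
      rw [e, ← h9]
      refine Real.log_le_log (by positivity) ?_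
      -- `1 + 16 W⁴ ≤ W⁹`, because `W⁵ ≥ 32`
      have h4 : (16:ℝ) ≤ (W:ℝ)^4 := by
        calc (16:ℝ) = 2^4 := by norm_num
          _ ≤ _ := by gcongr
      have h5 : (32:ℝ) ≤ (W:ℝ)^5 := by
        calc (32:ℝ) = 2^5 := by norm_num
          _ ≤ _ := by gcongr
      have : (W:ℝ)^9 = (W:ℝ)^4 * (W:ℝ)^5 := by ring
      rw [this]
      nlinarith
    have hs := sup_sq_le hδ hW hdeg hx₀ hmax hM
    rw [sq_abs] at hw
    calc ∫ t in (0:ℝ)..δ, ((f - g).eval t)^2 / t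
        ≤ ((f - g).eval x₀)^2 * Real.log (1 + (4 * (W:ℝ)^2 / δ)^2 * δ^2) := hw
      _ ≤ ((64 + 32 / δ) * (10 * Real.log W) * H12sqI 0 δ (fun t => (f - g).eval t))
            * (9 * Real.log W) :=
          mul_le_mul hs hlog (Real.log_nonneg (le_add_of_nonneg_right (by positivity)))
            (by positivity)
      _ ≤ ((64 + 32 / δ) * (10 * Real.log W) *
            (2 * (H12sqI 0 δ (fun t => f.eval t) + H12sqI 0 δ (fun t => g.eval t))))
            * (9 * Real.log W) := by gcongr
      _ = _ := by ring
end
end
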